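/- Let λ be a left-infinite word and ρ a right-infinite word over a finite alphabet A, and let m be a natural number. Write λ = λ'·λ_m and ρ = ρ_m·ρ', where λ_m is the suffix of λ of length m, ρ_m is the prefix of ρ of length m, λ' is the left-infinite word obtained from λ by deleting its last m letters, and ρ' is the right-infinite word obtained from ρ by deleting its first m letters. Then for every natural number n with rog_{λ,ρ}(n) ≥ m, one has n ≥ m and rog_{λ',ρ'}(n − m) = rog_{λ,ρ}(n) − m. -/

import Mathlib

/-- The suffix of length `n` of the left-infinite word `⋯ (lam 2)(lam 1)(lam 0)`. -/
def lSuffix {A : Type*} (lam : ℕ → A) (n : ℕ) : List A := (List.range n).reverse.map lam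

/-- The prefix of length `n` of the right-infinite word `(rho 0)(rho 1)(rho 2) ⋯`. -/
def rPrefix {A : Type*} (rho : ℕ → A) (n : ℕ) : List A := (List.range n).map rho

/-- The left overlap gap between two finite words. -/
noncomputable def logGap {A : Type*} (u v : List A) : ℕ :=
  sInf {n | ∃ x x' : List A, x.length = n ∧ x'.length = n ∧ u ++ x = x' ++ v}

/-- The right overlap gap between two finite words. -/
noncomputable def rogGap {A : Type*} (u v : List A) : ℕ :=
  sInf {n | ∃ x x' : List A, x.length = n ∧ x'.length = n ∧ x ++ u = v ++ x'}

/-- The overlap gap between two finite words. -/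
noncomputable def ogGap {A : Type*} (u v : List A) : ℕ := min (logGap u v) (rogGap u v)

/-! An equation `xu = vx'` stays solvable when a word of length `m` is appended to `u` and one of
the same length is prepended to `v`, with `m` more letters in `x` and `x'`; conversely, once `x` has
at least `m` letters, the added words can be cancelled from both sides. So the admissible lengths
for the longer words that are at least `m` are exactly the translates by `m` of those for the
shorter words. -/

/-- The equation `x ++ u = v ++ x'` is solvable with words `x`, `x'` of length `n`. The least such
`n` is `rogGap u v`, which is `0` when there is none, as happens for `u`, `v` of unequal length. -/
def HasRightOverlapGap {A : Type*} (u v : List A) (n : ℕ) : Prop :=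
  ∃ x x' : List A, x.length = n ∧ x'.length = n ∧ x ++ u = v ++ x'

section Words

variable {A : Type*} {u v s p : List A}

theorem rogGap_eq_sInf (u v : List A) : rogGap u v = sInf {n | HasRightOverlapGap u v n} := rfl

theorem HasRightOverlapGap.rogGap_le {n : ℕ} (h : HasRightOverlapGap u v n) : rogGap u v ≤ n :=
  Nat.sInf_le h

theorem rogGap_le_length (h : u.length = v.length) : rogGap u v ≤ v.length :=
  HasRightOverlapGap.rogGap_le ⟨v, u, rfl, h, rfl⟩

theorem HasRightOverlapGap.append_append {n : ℕ} (hsp : s.length = p.length)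
    (h : HasRightOverlapGap u v n) : HasRightOverlapGap (u ++ s) (p ++ v) (n + p.length) := by
  obtain ⟨x, x', hx, hx', hxx'⟩ := h
  refine ⟨p ++ x, x' ++ s, by simp [hx, add_comm], by simp [hx', hsp], ?_⟩
  calc
    (p ++ x) ++ (u ++ s) = p ++ (x ++ u) ++ s := by simp only [List.append_assoc]
    _ = p ++ (v ++ x') ++ s := by rw [hxx']
    _ = (p ++ v) ++ (x' ++ s) := by simp only [List.append_assoc]

theorem HasRightOverlapGap.of_append_append {n : ℕ} (hsp : s.length = p.length)
    (h : HasRightOverlapGap (u ++ s) (p ++ v) (n + p.length)) : HasRightOverlapGap u v n := by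
  obtain ⟨y, y', hy, hy', hyy'⟩ := h
  obtain ⟨x, rfl⟩ : p <+: y :=
    List.prefix_of_prefix_length_le ⟨v ++ y', by rw [hyy', List.append_assoc]⟩
      (List.prefix_append y (u ++ s)) (by lia)
  obtain ⟨x', rfl⟩ : s <:+ y' :=
    List.suffix_of_suffix_length_le ⟨p ++ x ++ u, by rw [← hyy', List.append_assoc]⟩
      (List.suffix_append (p ++ v) y') (by lia)
  have hx : x.length = n := by simpa [add_comm p.length] using hy
  have hx' : x'.length = n := by simpa [hsp] using hy'
  have hcancel : p ++ (x ++ u ++ s) = p ++ (v ++ x' ++ s) := by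
    simpa only [List.append_assoc] using hyy'
  exact ⟨x, x', hx, hx', List.append_cancel_right (List.append_cancel_left hcancel)⟩

theorem hasRightOverlapGap_append_append_iff {n : ℕ} (hsp : s.length = p.length) :
    HasRightOverlapGap (u ++ s) (p ++ v) (n + p.length) ↔ HasRightOverlapGap u v n :=
  ⟨.of_append_append hsp, .append_append hsp⟩

theorem rogGap_append_append (hsp : s.length = p.length)
    (hp : p.length ≤ rogGap (u ++ s) (p ++ v)) :
    rogGap (u ++ s) (p ++ v) = rogGap u v + p.length := by
  rw [rogGap_eq_sInf] at hp
  simpa only [hasRightOverlapGap_append_append_iff hsp, ← rogGap_eq_sInf] using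
    (Nat.sInf_add hp).symm

end Words

section InfiniteWords

variable {A : Type*}

@[simp]
theorem length_lSuffix (lam : ℕ → A) (n : ℕ) : (lSuffix lam n).length = n := by
  simp [lSuffix]

@[simp]
theorem length_rPrefix (rho : ℕ → A) (n : ℕ) : (rPrefix rho n).length = n := by
  simp [rPrefix]

theorem lSuffix_add (lam : ℕ → A) (m n : ℕ) :
    lSuffix lam (m + n) = lSuffix (fun i => lam (i + m)) n ++ lSuffix lam m := by
  simp [lSuffix, List.range_add, Function.comp_def, add_comm]

theorem rPrefix_add (rho : ℕ → A) (m n : ℕ) :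
    rPrefix rho (m + n) = rPrefix rho m ++ rPrefix (fun i => rho (i + m)) n := by
  simp [rPrefix, List.range_add, Function.comp_def, add_comm]

theorem rogGap_lSuffix_rPrefix_le (lam rho : ℕ → A) (n : ℕ) :
    rogGap (lSuffix lam n) (rPrefix rho n) ≤ n := by
  simpa using rogGap_le_length (u := lSuffix lam n) (v := rPrefix rho n) (by simp)

theorem rogGap_lSuffix_rPrefix_add (lam rho : ℕ → A) (m n : ℕ)
    (h : m ≤ rogGap (lSuffix lam (m + n)) (rPrefix rho (m + n))) :
    rogGap (lSuffix lam (m + n)) (rPrefix rho (m + n)) =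
      rogGap (lSuffix (fun i => lam (i + m)) n) (rPrefix (fun i => rho (i + m)) n) + m := by
  rw [lSuffix_add, rPrefix_add] at h ⊢
  simpa using rogGap_append_append (p := rPrefix rho m) (by simp) (by simpa using h)

end InfiniteWords

theorem rog_shift_general {A : Type*} (lam rho : ℕ → A) (m : ℕ) :
    ∀ n : ℕ, m ≤ rogGap (lSuffix lam n) (rPrefix rho n) →
      m ≤ n ∧
      rogGap (lSuffix (fun i => lam (i + m)) (n - m))
          (rPrefix (fun i => rho (i + m)) (n - m)) =
        rogGap (lSuffix lam n) (rPrefix rho n) - m := by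
  intro n h
  have hmn : m ≤ n := h.trans (rogGap_lSuffix_rPrefix_le lam rho n)
  obtain ⟨k, rfl⟩ := Nat.exists_eq_add_of_le hmn
  refine ⟨hmn, ?_⟩
  rw [rogGap_lSuffix_rPrefix_add lam rho m k h, Nat.add_sub_cancel_left, Nat.add_sub_cancel_right]

/-- Deleting the last `m` letters of `λ` (giving `λ'`) and the first `m` letters of `ρ`
(giving `ρ'`): if `rog_{λ,ρ}(n) ≥ m` then `n ≥ m` and
`rog_{λ',ρ'}(n - m) = rog_{λ,ρ}(n) - m`. -/
theorem rog_shift {A : Type*} [Fintype A] [Nonempty A] (lam rho : ℕ → A) (m : ℕ) :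
    ∀ n : ℕ, m ≤ rogGap (lSuffix lam n) (rPrefix rho n) →
      m ≤ n ∧
      rogGap (lSuffix (fun i => lam (i + m)) (n - m))
          (rPrefix (fun i => rho (i + m)) (n - m)) =
        rogGap (lSuffix lam n) (rPrefix rho n) - m :=
  rog_shift_general lam rho m
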